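/- Suppose X ≠ ∅. Then for every vertex v of G: Pr[φ ∈ 𝒮 and φ(I ∪ O) ∩ X ≠ ∅ | φ(c) = v] ≤ λ₁ · ρ_X(v) · (1 − D)^{m−1}. -/

import Mathlib

open scoped BigOperators

/-- The arc relation of the oriented star `S_{k,l}` on `Fin (k+l+1)`:
vertex `0` is the center, vertices `1,…,k` are the out-leaves and
vertices `k+1,…,k+l` are the in-leaves. -/
def StarArc (k l : ℕ) (a b : Fin (k + l + 1)) : Prop :=
  (a.val = 0 ∧ 1 ≤ b.val ∧ b.val ≤ k) ∨ (b.val = 0 ∧ k + 1 ≤ a.val)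

/-- `φ` witnesses an induced copy of `S_{k,l}` in the digraph with arc relation `A`:
it is injective and maps arcs to arcs and non-arcs to non-arcs. -/
def IsStarEmb (k l : ℕ) {V : Type*} (A : V → V → Prop) (φ : Fin (k + l + 1) → V) : Prop :=
  Function.Injective φ ∧ ∀ a b, StarArc k l a b ↔ A (φ a) (φ b)

/-- `s(G)`: the probability that a uniformly random map `V(S_{k,l}) → V(G)`
induces a copy of `S_{k,l}`. -/
noncomputable def starProb (k l : ℕ) (V : Type*) [Fintype V] (A : V → V → Prop) : ℝ :=
  (Nat.card {φ : Fin (k + l + 1) → V // IsStarEmb k l A φ} : ℝ) /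
    (Fintype.card V : ℝ) ^ (k + l + 1)

/-- The probability that a uniformly random map induces a copy of `S_{k,l}`
and moreover has property `P`. -/
noncomputable def starProbOn (k l : ℕ) {V : Type*} [Fintype V] (A : V → V → Prop)
    (P : (Fin (k + l + 1) → V) → Prop) : ℝ :=
  (Nat.card {φ : Fin (k + l + 1) → V // IsStarEmb k l A φ ∧ P φ} : ℝ) /
    (Fintype.card V : ℝ) ^ (k + l + 1)

/-- `s(z→v) = Pr[φ ∈ 𝒮 | φ z = v]`. -/
noncomputable def sCond (k l : ℕ) {V : Type*} [Fintype V] (A : V → V → Prop)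
    (z : Fin (k + l + 1)) (v : V) : ℝ :=
  (Nat.card {φ : Fin (k + l + 1) → V // IsStarEmb k l A φ ∧ φ z = v} : ℝ) /
    (Fintype.card V : ℝ) ^ (k + l)

/-- `Pr[φ ∈ 𝒮 ∧ P φ | φ(c) = v]`, where `c = 0` is the center of the star. -/
noncomputable def sCondOn (k l : ℕ) {V : Type*} [Fintype V] (A : V → V → Prop) (v : V)
    (P : (Fin (k + l + 1) → V) → Prop) : ℝ :=
  (Nat.card {φ : Fin (k + l + 1) → V // IsStarEmb k l A φ ∧ φ 0 = v ∧ P φ} : ℝ) /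
    (Fintype.card V : ℝ) ^ (k + l)

/-- `s(v) = (s(c→v) + l·s(i→v) + k·s(o→v))/(m+1)`, where the center is `0`,
`k+1` is an in-leaf and `1` is an out-leaf. -/
noncomputable def sVert (k l : ℕ) {V : Type*} [Fintype V] (A : V → V → Prop) (v : V) : ℝ :=
  (sCond k l A 0 v + l * sCond k l A (Fin.ofNat (k + l + 1) (k + 1)) v
      + k * sCond k l A 1 v) / ((k : ℝ) + l + 1)

/-- `ρ(v)`: the proportion of vertices adjacent to `v`. -/
noncomputable def rho {V : Type*} [Fintype V] (A : V → V → Prop) (v : V) : ℝ :=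
  (Nat.card {u : V // A v u ∨ A u v} : ℝ) / (Fintype.card V : ℝ)

/-- `ρ⁺_B(v)`: the proportion of vertices that are out-neighbours of `v` lying in `B`. -/
noncomputable def rhoPIn {V : Type*} [Fintype V] (A : V → V → Prop) (B : Set V) (v : V) : ℝ :=
  (Nat.card {u : V // A v u ∧ u ∈ B} : ℝ) / (Fintype.card V : ℝ)

/-- `ρ⁻_B(v)`: the proportion of vertices that are in-neighbours of `v` lying in `B`. -/
noncomputable def rhoMIn {V : Type*} [Fintype V] (A : V → V → Prop) (B : Set V) (v : V) : ℝ :=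
  (Nat.card {u : V // A u v ∧ u ∈ B} : ℝ) / (Fintype.card V : ℝ)

/-- `ρ_B(v)`: the proportion of vertices adjacent to `v` lying in `B`. -/
noncomputable def rhoIn {V : Type*} [Fintype V] (A : V → V → Prop) (B : Set V) (v : V) : ℝ :=
  (Nat.card {u : V // (A v u ∨ A u v) ∧ u ∈ B} : ℝ) / (Fintype.card V : ℝ)

/-- `μ(B) = |B|/n`. -/
noncomputable def muSet {V : Type*} [Fintype V] (B : Set V) : ℝ :=
  (Nat.card B : ℝ) / (Fintype.card V : ℝ)

/-- `X`: the set of vertices of large degree, `ρ(v) ≥ 1/2`. -/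
def bigX {V : Type*} [Fintype V] (A : V → V → Prop) : Set V := {v | 1 / 2 ≤ rho A v}

/-- `Y = V(G) \ X`. -/
def bigY {V : Type*} [Fintype V] (A : V → V → Prop) : Set V := (bigX A)ᶜ

/-- `α = μ(X)`. -/
noncomputable def alphaX {V : Type*} [Fintype V] (A : V → V → Prop) : ℝ := muSet (bigX A)

/-- `D = min_{x ∈ X} ρ(x)`. -/
noncomputable def Dmin {V : Type*} [Fintype V] (A : V → V → Prop) : ℝ :=
  sInf (rho A '' bigX A)

/-- `β = max_{y ∈ Y} ρ_Y(y)`. -/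
noncomputable def betaY {V : Type*} [Fintype V] (A : V → V → Prop) : ℝ :=
  sSup ((fun y => rhoIn A (bigY A) y) '' bigY A)

/-- `γ = min_{x ∈ X} ρ⁻_Y(x)`. -/
noncomputable def gammaX {V : Type*} [Fintype V] (A : V → V → Prop) : ℝ :=
  sInf ((fun x => rhoMIn A (bigY A) x) '' bigX A)

/-- `S = (m+1)·min_{v ∈ V(G)} s(v)`. -/
noncomputable def Smin (k l : ℕ) {V : Type*} [Fintype V] (A : V → V → Prop) : ℝ :=
  ((k : ℝ) + l + 1) * sInf (Set.range (sVert k l A))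

/-- `S₁ = min_{x ∈ X} (ρ⁺_Y(x))^k (ρ⁻_Y(x))^l`. -/
noncomputable def S1min (k l : ℕ) {V : Type*} [Fintype V] (A : V → V → Prop) : ℝ :=
  sInf ((fun x => rhoPIn A (bigY A) x ^ k * rhoMIn A (bigY A) x ^ l) '' bigX A)

/-- `S₂ = S₁ − ((m−1)/((m+1)·C(m,k)))·(α+β)(1−α)(1−D)^{m−2}`. -/
noncomputable def S2min (k l : ℕ) {V : Type*} [Fintype V] (A : V → V → Prop) : ℝ :=
  S1min k l A - (((k : ℝ) + l - 1) / (((k : ℝ) + l + 1) * (Nat.choose (k + l) k : ℝ)))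
    * (alphaX A + betaY A) * (1 - alphaX A) * (1 - Dmin A) ^ (k + l - 2)

/-- `λ₀ = k^k l^l / m^m`. -/
noncomputable def lam0 (k l : ℕ) : ℝ := (k : ℝ) ^ k * (l : ℝ) ^ l / ((k : ℝ) + l) ^ (k + l)

/-- `λ₁ = k^k l (l−1)^{l−1} / (m−1)^{m−1}` (with the convention `0⁰ = 1`). -/
noncomputable def lam1 (k l : ℕ) : ℝ :=
  (k : ℝ) ^ k * (l : ℝ) * ((l : ℝ) - 1) ^ (l - 1) / ((k : ℝ) + l - 1) ^ (k + l - 1)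

/-- The edge density `ρ(Z)` of a set of vertices `Z`: the number of unordered adjacent
pairs in `Z` divided by `C(|Z|,2)`. -/
noncomputable def densSet {V : Type*} [Fintype V] (A : V → V → Prop) (Z : Set V) : ℝ :=
  ((Nat.card {p : V × V // p.1 ∈ Z ∧ p.2 ∈ Z ∧ (A p.1 p.2 ∨ A p.2 p.1)} : ℝ) / 2) /
    (Nat.choose (Nat.card Z) 2 : ℝ)

/-- `d = 1 − (E_{x ∈ X} ρ⁻_Y(x))/(1−α)`. -/
noncomputable def dXY {V : Type*} [Fintype V] (A : V → V → Prop) : ℝ :=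
  1 - ((∑ᶠ x ∈ bigX A, rhoMIn A (bigY A) x) / (Nat.card (bigX A) : ℝ)) / (1 - alphaX A)

/-- `OPT(k,l)`. -/
noncomputable def OPT (k l : ℕ) : ℝ :=
  if k = l then
    (1 / 2 ^ (2 * k)) *
      sSup {y : ℝ | ∃ a ∈ Set.Icc (0 : ℝ) 1, y = a * (1 - a) ^ (2 * k) + (1 - a) * a ^ (2 * k)}
  else
    sSup {y : ℝ | ∃ a ∈ Set.Icc (0 : ℝ) (1 / 2),
      ∃ d ∈ Set.Icc (0 : ℝ) ((k : ℝ) / ((k : ℝ) + (l : ℝ))),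
      y = a * (1 - a) ^ (k + l) * d ^ k * (1 - d) ^ l
        + (((k : ℝ) - 1) ^ (k - 1) * (l : ℝ) ^ l / ((k : ℝ) + (l : ℝ) - 1) ^ (k + l - 1))
          * (1 - a) * a ^ (k + l) * (1 - d)}

/-
Fix the centre at `v`. If a leaf of an induced star is mapped to `x ∈ X`, then the images of the
other leaves avoid the neighbourhood of `x`. So if `x` has `p` out-neighbours and `q` in-neighbours
of `v` among its non-neighbours, where `p + q ≤ (1 - D) n`, there are at most `k p^(k-1) q^l` such
stars when `x` is the image of an out-leaf, and at most `l p^k q^(l-1)` when it is the image of an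
in-leaf. AM-GM bounds these by `λ₁(l, k)` and `λ₁(k, l)` times `((1 - D) n)^(m-1)`. The constant
for in-leaves is the larger one because `(j / (j + 1))^j` decreases in `j`, again by AM-GM. Summing
over the neighbours `x ∈ X` of `v` gives the bound.
-/

theorem pow_mul_pow_le_weighted_mean_pow {x y : ℝ} (hx : 0 ≤ x) (hy : 0 ≤ y) (a b : ℕ) :
    x ^ a * y ^ b ≤ ((a * x + b * y) / (a + b)) ^ (a + b) := by
  rcases Nat.eq_zero_or_pos (a + b) with h | h
  · obtain ⟨rfl, rfl⟩ := Nat.add_eq_zero_iff.1 h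
    simp
  have hab : (0 : ℝ) < a + b := mod_cast h
  have amgm := Real.geom_mean_le_arith_mean Finset.univ ![(a : ℝ), b] ![x, y]
    (by simp [Fin.forall_fin_two]) (by simpa using hab) (by simp [Fin.forall_fin_two, hx, hy])
  simp only [Fin.prod_univ_two, Fin.sum_univ_two, Matrix.cons_val_zero, Matrix.cons_val_one,
    Real.rpow_natCast] at amgm
  rw [Real.rpow_inv_le_iff_of_pos (by positivity) (by positivity) hab] at amgm
  exact_mod_cast amgm

theorem pow_mul_pow_le_of_add_le {p q s : ℝ} (hp : 0 ≤ p) (hq : 0 ≤ q) (hs : p + q ≤ s)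
    (a b : ℕ) : p ^ a * q ^ b ≤ a ^ a * b ^ b * (s / (a + b)) ^ (a + b) := by
  have self_pow_pos (n : ℕ) : (0 : ℝ) < (n : ℝ) ^ n := mod_cast Nat.pow_self_pos
  have mul_div_le {t : ℝ} (ht : 0 ≤ t) (n : ℕ) : n * (t / n) ≤ t := by
    rcases eq_or_ne n 0 with rfl | hn
    · simpa using ht
    · field_simp; rfl
  have amgm := pow_mul_pow_le_weighted_mean_pow (div_nonneg hp a.cast_nonneg)
    (div_nonneg hq b.cast_nonneg) a b
  rw [div_pow, div_pow, div_mul_div_comm,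
    div_le_iff₀' (mul_pos (self_pow_pos a) (self_pow_pos b))] at amgm
  refine amgm.trans ?_
  gcongr
  exact (add_le_add (mul_div_le hp a) (mul_div_le hq b)).trans hs

theorem antitone_div_add_one_pow : Antitone fun j : ℕ => ((j : ℝ) / (j + 1)) ^ j := by
  refine antitone_nat_of_succ_le fun j => ?_
  have amgm := pow_mul_pow_le_of_add_le (p := j + 1) (q := 1) (s := j + 2) (by positivity)
    zero_le_one (by linarith) j 1
  push_cast
  rw [div_pow, div_pow, div_le_div_iff₀ (by positivity) (by positivity)]
  rw [div_pow, mul_div_assoc', le_div_iff₀ (by positivity)] at amgm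
  convert amgm using 1 <;> push_cast <;> ring

theorem lam1_nonneg (k : ℕ) {l : ℕ} (hl : 1 ≤ l) : 0 ≤ lam1 k l := by
  have hl' : (0 : ℝ) ≤ l - 1 := sub_nonneg.2 (mod_cast hl)
  have hkl : (0 : ℝ) ≤ k + l - 1 := by rw [add_sub_assoc]; positivity
  unfold lam1
  positivity

theorem lam1_swap_le {k l : ℕ} (hl : 1 ≤ l) (hlk : l ≤ k) : lam1 l k ≤ lam1 k l := by
  obtain ⟨L, rfl⟩ := Nat.exists_eq_add_of_le' hl
  obtain ⟨K, rfl⟩ := Nat.exists_eq_add_of_le' (hl.trans hlk)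
  have anti : ((K : ℝ) / (K + 1)) ^ K ≤ ((L : ℝ) / (L + 1)) ^ L :=
    antitone_div_add_one_pow (Nat.le_of_succ_le_succ hlk)
  rw [div_pow, div_pow, div_le_div_iff₀ (by positivity) (by positivity)] at anti
  simp only [lam1, Nat.add_sub_cancel, Nat.cast_add_one, add_sub_cancel_right,
    add_comm (L + 1) (K + 1), add_comm ((L : ℝ) + 1)]
  have : (0 : ℝ) ≤ K + 1 + (L + 1) - 1 := by rw [← add_assoc, add_sub_cancel_right]; positivity
  gcongr ?_ / _
  calc ((L : ℝ) + 1) ^ (L + 1) * (K + 1) * K ^ K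
      = (K + 1) * (L + 1) * (K ^ K * (L + 1) ^ L) := by ring
    _ ≤ (K + 1) * (L + 1) * (L ^ L * (K + 1) ^ K) := by gcongr
    _ = (K + 1) ^ (K + 1) * (L + 1) * L ^ L := by ring

theorem mul_pow_mul_pow_pred_le_lam1 {k l : ℕ} (hl : 1 ≤ l) {p q s : ℝ} (hp : 0 ≤ p)
    (hq : 0 ≤ q) (hs : p + q ≤ s) :
    l * (p ^ k * q ^ (l - 1)) ≤ lam1 k l * s ^ (k + l - 1) := by
  have amgm := pow_mul_pow_le_of_add_le hp hq hs k (l - 1)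
  rw [Nat.cast_pred hl, ← add_sub_assoc, ← Nat.add_sub_assoc hl] at amgm
  calc l * (p ^ k * q ^ (l - 1))
      ≤ l * (k ^ k * (l - 1) ^ (l - 1) * (s / (k + l - 1)) ^ (k + l - 1)) := by gcongr
    _ = lam1 k l * s ^ (k + l - 1) := by rw [lam1, div_pow]; ring

section Counting

open Finset

theorem prod_erase_castAdd {M : Type*} [CommMonoid M] {k l : ℕ} (f : Fin (k + l) → M) (i : Fin k) :
    ∏ c ∈ univ.erase (Fin.castAdd l i), f c =
      (∏ j ∈ univ.erase i, f (Fin.castAdd l j)) * ∏ j, f (Fin.natAdd k j) := by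
  have natAdd_ne (j : Fin l) : Fin.natAdd k j ≠ Fin.castAdd l i := by
    simp only [ne_eq, Fin.ext_iff, Fin.val_natAdd, Fin.val_castAdd]
    lia
  simp [← filter_ne', prod_filter, Fin.prod_univ_add, natAdd_ne]

theorem prod_erase_natAdd {M : Type*} [CommMonoid M] {k l : ℕ} (f : Fin (k + l) → M) (i : Fin l) :
    ∏ c ∈ univ.erase (Fin.natAdd k i), f c =
      (∏ j, f (Fin.castAdd l j)) * ∏ j ∈ univ.erase i, f (Fin.natAdd k j) := by
  have castAdd_ne (j : Fin k) : Fin.castAdd l j ≠ Fin.natAdd k i := by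
    simp only [ne_eq, Fin.ext_iff, Fin.val_natAdd, Fin.val_castAdd]
    lia
  simp [← filter_ne', prod_filter, Fin.prod_univ_add, castAdd_ne]

theorem injOn_tail {α : Type*} {n : ℕ} (a : α) :
    Set.InjOn (Fin.tail : (Fin (n + 1) → α) → Fin n → α) {φ | φ 0 = a} :=
  fun φ hφ ψ hψ h => by rw [← Fin.cons_self_tail φ, ← Fin.cons_self_tail ψ, hφ, hψ, h]

variable {V : Type*} [Fintype V] {A : V → V → Prop} {k l : ℕ}

open Classical in
/-- The out-neighbours of `v` that are not also in-neighbours. In an induced star no leaf is joined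
to the centre by arcs in both directions, so these are the possible images of an out-leaf. -/
noncomputable def onlyOutNbrs (A : V → V → Prop) (v : V) : Finset V := {u | A v u ∧ ¬ A u v}

open Classical in
/-- The in-neighbours of `v` that are not also out-neighbours: the possible images of an in-leaf. -/
noncomputable def onlyInNbrs (A : V → V → Prop) (v : V) : Finset V := {u | A u v ∧ ¬ A v u}

open Classical in
/-- The vertices not adjacent to `x`, which include `x` itself when it carries no loop. -/
noncomputable def nonNbrs (A : V → V → Prop) (x : V) : Finset V := {u | ¬ (A x u ∨ A u x)}

/-- The possible images of each leaf of `S_{k,l}` when the centre is sent to `v`. Leaf `b` is the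
vertex `b.succ` of the star, so out-leaves come first. -/
noncomputable def leafNbrs (k l : ℕ) (A : V → V → Prop) (v : V) : Fin (k + l) → Finset V :=
  Fin.append (fun _ => onlyOutNbrs A v) fun _ => onlyInNbrs A v

theorem disjoint_onlyOutNbrs_onlyInNbrs (A : V → V → Prop) (v : V) :
    Disjoint (onlyOutNbrs A v) (onlyInNbrs A v) := by
  simp +contextual [disjoint_left, onlyOutNbrs, onlyInNbrs]

theorem rho_mul_card (A : V → V → Prop) (x : V) :
    rho A x * Fintype.card V = Nat.card {u : V // A x u ∨ A u x} := by
  have : Nonempty V := ⟨x⟩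
  exact div_mul_cancel₀ _ (by positivity)

theorem rhoIn_mul_card (A : V → V → Prop) (B : Set V) (v : V) :
    rhoIn A B v * Fintype.card V = Nat.card {u : V // (A v u ∨ A u v) ∧ u ∈ B} := by
  have : Nonempty V := ⟨v⟩
  exact div_mul_cancel₀ _ (by positivity)

theorem card_nonNbrs (A : V → V → Prop) (x : V) :
    (#(nonNbrs A x) : ℝ) = (1 - rho A x) * Fintype.card V := by
  classical
  have := card_filter_add_card_filter_not (s := (univ : Finset V)) fun u => A x u ∨ A u x
  rw [sub_mul, one_mul, rho_mul_card, Nat.card_eq_fintype_card, Fintype.card_subtype,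
    eq_sub_iff_add_eq', nonNbrs]
  exact_mod_cast this

theorem rho_le_one (A : V → V → Prop) (x : V) : rho A x ≤ 1 :=
  div_le_one_of_le₀ (mod_cast Nat.card_eq_fintype_card (α := V) ▸ Finite.card_subtype_le _)
    (Nat.cast_nonneg _)

theorem card_onlyOutNbrs_inter_add_card_onlyInNbrs_inter_le [DecidableEq V] (A : V → V → Prop)
    (v : V) (N : Finset V) : #(onlyOutNbrs A v ∩ N) + #(onlyInNbrs A v ∩ N) ≤ #N := by
  rw [← card_union_of_disjoint ((disjoint_onlyOutNbrs_onlyInNbrs A v).mono inter_subset_left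
    inter_subset_left), ← union_inter_distrib_right]
  exact card_le_card inter_subset_right

theorem card_filter_onlyOutNbrs_add_card_filter_onlyInNbrs_le (A : V → V → Prop) (B : Set V)
    [DecidablePred (· ∈ B)] (v : V) :
    (#{x ∈ onlyOutNbrs A v | x ∈ B} + #{x ∈ onlyInNbrs A v | x ∈ B} : ℝ) ≤
      rhoIn A B v * Fintype.card V := by
  classical
  rw [rhoIn_mul_card, Nat.card_eq_fintype_card, Fintype.card_subtype]
  norm_cast
  rw [← card_union_of_disjoint ((disjoint_onlyOutNbrs_onlyInNbrs A v).mono (filter_subset _ _)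
    (filter_subset _ _)), ← filter_union]
  refine card_le_card fun u => ?_
  simp only [onlyOutNbrs, onlyInNbrs, mem_filter, mem_union, mem_univ, true_and]
  tauto

namespace IsStarEmb

variable {φ : Fin (k + l + 1) → V}

theorem leaf_mem_leafNbrs (h : IsStarEmb k l A φ) (b : Fin (k + l)) :
    φ b.succ ∈ leafNbrs k l A (φ 0) b := by
  induction b using Fin.addCases with
  | left i => simp [leafNbrs, onlyOutNbrs, ← h.2, StarArc]
  | right j => simp [leafNbrs, onlyInNbrs, ← h.2, StarArc]

theorem leaf_mem_nonNbrs (h : IsStarEmb k l A φ) (b c : Fin (k + l)) :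
    φ c.succ ∈ nonNbrs A (φ b.succ) := by
  simp [nonNbrs, ← h.2, StarArc]

end IsStarEmb

theorem card_isStarEmb_leaf_mem_le_sum_prod [DecidableEq V] (k l : ℕ) (A : V → V → Prop) (v : V)
    (B : Set V) [DecidablePred (· ∈ B)] :
    Nat.card {φ : Fin (k + l + 1) → V // IsStarEmb k l A φ ∧ φ 0 = v ∧ ∃ a, a ≠ 0 ∧ φ a ∈ B} ≤
      ∑ b, ∑ x ∈ leafNbrs k l A v b with x ∈ B,
        ∏ c ∈ univ.erase b, #(leafNbrs k l A v c ∩ nonNbrs A x) := by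
  let leafMaps (b : Fin (k + l)) (x : V) : Finset (Fin (k + l) → V) :=
    {ψ ∈ Fintype.piFinset fun c => leafNbrs k l A v c ∩ nonNbrs A x | ψ b = x}
  have card_leafMaps_le (b x) : #(leafMaps b x) ≤
      ∏ c ∈ univ.erase b, #(leafNbrs k l A v c ∩ nonNbrs A x) := by
    refine (Fintype.card_filter_piFinset_eq (α := fun _ => V) _ b x).trans_le ?_
    split_ifs <;> simp
  classical
  rw [Nat.card_eq_fintype_card, Fintype.card_subtype]
  calc _ ≤ #(univ.biUnion fun b => {x ∈ leafNbrs k l A v b | x ∈ B}.biUnion (leafMaps b)) := by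
        refine card_le_card_of_injOn Fin.tail ?_ ((injOn_tail v).mono fun φ hφ =>
          (mem_filter.1 hφ).2.2.1)
        intro φ hφ
        obtain ⟨-, emb, rfl, a, ha, haB⟩ := mem_filter.1 hφ
        obtain ⟨b, rfl⟩ := Fin.exists_succ_eq.2 ha
        simp only [coe_biUnion, Set.mem_iUnion, mem_coe, mem_univ, exists_prop, true_and,
          mem_filter, leafMaps, Fintype.mem_piFinset, mem_inter]
        exact ⟨b, φ b.succ, ⟨emb.leaf_mem_leafNbrs b, haB⟩,
          fun c => ⟨emb.leaf_mem_leafNbrs c, emb.leaf_mem_nonNbrs b c⟩, rfl⟩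
    _ ≤ _ := card_biUnion_le.trans <| sum_le_sum fun b _ =>
        card_biUnion_le.trans <| sum_le_sum fun x _ => card_leafMaps_le b x

theorem card_isStarEmb_leaf_mem_le_sum_add_sum [DecidableEq V] (k l : ℕ) (A : V → V → Prop) (v : V)
    (B : Set V) [DecidablePred (· ∈ B)] :
    Nat.card {φ : Fin (k + l + 1) → V // IsStarEmb k l A φ ∧ φ 0 = v ∧ ∃ a, a ≠ 0 ∧ φ a ∈ B} ≤
      ∑ x ∈ onlyOutNbrs A v with x ∈ B,
        k * (#(onlyInNbrs A v ∩ nonNbrs A x) ^ l * #(onlyOutNbrs A v ∩ nonNbrs A x) ^ (k - 1)) +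
      ∑ x ∈ onlyInNbrs A v with x ∈ B,
        l * (#(onlyOutNbrs A v ∩ nonNbrs A x) ^ k * #(onlyInNbrs A v ∩ nonNbrs A x) ^ (l - 1)) := by
  refine (card_isStarEmb_leaf_mem_le_sum_prod k l A v B).trans_eq ?_
  simp only [Fin.sum_univ_add, leafNbrs, prod_erase_castAdd, prod_erase_natAdd, Fin.append_left,
    Fin.append_right, prod_const, sum_const, card_erase_of_mem, mem_univ, card_univ,
    Fintype.card_fin, smul_eq_mul, mul_sum, mul_comm (_ ^ l)]

theorem card_onlyOutNbrs_inter_nonNbrs_add_le [DecidableEq V] {d : ℝ} {x : V} (hx : d ≤ rho A x)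
    (v : V) : (#(onlyOutNbrs A v ∩ nonNbrs A x) + #(onlyInNbrs A v ∩ nonNbrs A x) : ℝ) ≤
      (1 - d) * Fintype.card V := by
  calc (#(onlyOutNbrs A v ∩ nonNbrs A x) + #(onlyInNbrs A v ∩ nonNbrs A x) : ℝ)
      ≤ #(nonNbrs A x) :=
        mod_cast card_onlyOutNbrs_inter_add_card_onlyInNbrs_inter_le A v (nonNbrs A x)
    _ = (1 - rho A x) * Fintype.card V := card_nonNbrs A x
    _ ≤ (1 - d) * Fintype.card V := by gcongr

theorem card_isStarEmb_leaf_mem_le_mul_lam1 (hl : 1 ≤ l) (hlk : l ≤ k) {B : Set V}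
    [DecidablePred (· ∈ B)] {d : ℝ} (hd : ∀ x ∈ B, d ≤ rho A x) (v : V) :
    (Nat.card {φ : Fin (k + l + 1) → V //
        IsStarEmb k l A φ ∧ φ 0 = v ∧ ∃ a, a ≠ 0 ∧ φ a ∈ B} : ℝ) ≤
      (#{x ∈ onlyOutNbrs A v | x ∈ B} + #{x ∈ onlyInNbrs A v | x ∈ B}) *
        (lam1 k l * ((1 - d) * Fintype.card V) ^ (k + l - 1)) := by
  classical
  set s : ℝ := (1 - d) * Fintype.card V
  have out_le : ∀ x ∈ B, (k * (#(onlyInNbrs A v ∩ nonNbrs A x) ^ l *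
      #(onlyOutNbrs A v ∩ nonNbrs A x) ^ (k - 1)) : ℝ) ≤ lam1 k l * s ^ (k + l - 1) := by
    intro x hx
    have sum_le := card_onlyOutNbrs_inter_nonNbrs_add_le (hd x hx) v
    calc _ ≤ lam1 l k * s ^ (l + k - 1) := mul_pow_mul_pow_pred_le_lam1 (hl.trans hlk)
          (Nat.cast_nonneg _) (Nat.cast_nonneg _) ((add_comm _ _).trans_le sum_le)
      _ ≤ lam1 k l * s ^ (k + l - 1) := by
          rw [add_comm l k]
          have : 0 ≤ s := le_trans (by positivity) sum_le
          gcongr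
          exact lam1_swap_le hl hlk
  have in_le : ∀ x ∈ B, (l * (#(onlyOutNbrs A v ∩ nonNbrs A x) ^ k *
      #(onlyInNbrs A v ∩ nonNbrs A x) ^ (l - 1)) : ℝ) ≤ lam1 k l * s ^ (k + l - 1) := fun x hx =>
    mul_pow_mul_pow_pred_le_lam1 hl (Nat.cast_nonneg _) (Nat.cast_nonneg _)
      (card_onlyOutNbrs_inter_nonNbrs_add_le (hd x hx) v)
  refine (Nat.cast_le.2 (card_isStarEmb_leaf_mem_le_sum_add_sum k l A v B)).trans ?_
  push_cast
  rw [add_mul, ← nsmul_eq_mul, ← nsmul_eq_mul]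
  exact add_le_add (sum_le_card_nsmul _ _ _ fun x hx => out_le x (mem_filter.1 hx).2)
    (sum_le_card_nsmul _ _ _ fun x hx => in_le x (mem_filter.1 hx).2)

end Counting

theorem Dmin_le_rho {V : Type*} [Fintype V] {A : V → V → Prop} {x : V} (hx : x ∈ bigX A) :
    Dmin A ≤ rho A x :=
  csInf_le ((bigX A).toFinite.image _).bddBelow (Set.mem_image_of_mem _ hx)

theorem stmt9_general {k l : ℕ} (hl : 1 ≤ l) (hlk : l ≤ k) {V : Type*} [Fintype V]
    (A : V → V → Prop) {B : Set V} {d : ℝ} (hd : ∀ x ∈ B, d ≤ rho A x) (v : V) :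
    sCondOn k l A v (fun φ => ∃ a : Fin (k + l + 1), a ≠ 0 ∧ φ a ∈ B)
      ≤ lam1 k l * rhoIn A B v * (1 - d) ^ (k + l - 1) := by
  classical
  rcases B.eq_empty_or_nonempty with rfl | ⟨b, hb⟩
  · simp [sCondOn, rhoIn]
  have hd_le : 0 ≤ 1 - d := sub_nonneg.2 ((hd b hb).trans (rho_le_one A b))
  have lam1_nonneg := lam1_nonneg k hl
  have : Nonempty V := ⟨v⟩
  refine div_le_of_le_mul₀ (by positivity) (by unfold rhoIn; positivity) ?_
  calc _ ≤ _ := card_isStarEmb_leaf_mem_le_mul_lam1 hl hlk hd v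
    _ ≤ rhoIn A B v * Fintype.card V *
          (lam1 k l * ((1 - d) * Fintype.card V) ^ (k + l - 1)) := by
        gcongr
        exact card_filter_onlyOutNbrs_add_card_filter_onlyInNbrs_le A B v
    _ = lam1 k l * rhoIn A B v * (1 - d) ^ (k + l - 1) * Fintype.card V ^ (k + l) := by
        rw [← mul_pow_sub_one (n := k + l) (by omega) (Fintype.card V : ℝ), mul_pow]
        ring

theorem stmt9 (k l : ℕ) (hl : 1 ≤ l) (hlk : l ≤ k) (hm : 6 ≤ k + l)
    (V : Type) [Fintype V] (A : V → V → Prop)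
    (hirr : Irreflexive A) (hopp : ∀ u v, A u v → ¬ A v u) (hn : 1 ≤ Fintype.card V)
    (hX : (bigX A).Nonempty) (v : V) :
    sCondOn k l A v (fun φ => ∃ a : Fin (k + l + 1), a ≠ 0 ∧ φ a ∈ bigX A)
      ≤ lam1 k l * rhoIn A (bigX A) v * (1 - Dmin A) ^ (k + l - 1) :=
  stmt9_general hl hlk A (fun _ => Dmin_le_rho) v
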